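/- Write C_w for C_w^{(n+1)/2}. For all integers 1 ≤ j, k ≤ N with j ≠ k, the (1,1) entry of the block M̃^{j-1,k-1} = ∫_{-1}^{α} P_{j-1}(x) W_{p,n}(x) P_{k-1}(x)^T dx equals [p(1-α²)^{n/2} / ((k-j)(j+k+n-1)(n+1)²)] · ( j(n-p+j-1)(n-p+k)/(n+2j-1) · C_j(α)C_{k-1}(α) − k(n-p+k-1)(n-p+j)/(n+2k-1) · C_{j-1}(α)C_k(α) + (p+j)(n+j-1)(n-p+j)(n-p+k)/((p+j-1)(n+2j-1)) · C_{j-2}(α)C_{k-1}(α) − (p+k)(n+k-1)(n-p+j)(n-p+k)/((p+k-1)(n+2k-1)) · C_{j-1}(α)C_{k-2}(α) ). -/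

import Mathlib

open Matrix

/-- Pochhammer symbol `(a)_k = a (a+1) ⋯ (a+k-1)`. -/
noncomputable def poch (a : ℝ) (k : ℕ) : ℝ := ∏ i ∈ Finset.range k, (a + i)

/-- Gegenbauer polynomial `C_w^λ(x)`, with the convention `C_w^λ = 0` for `w < 0`. -/
noncomputable def geg (l : ℝ) (w : ℤ) (x : ℝ) : ℝ :=
  if w < 0 then 0 else
    poch (2 * l) w.toNat / (w.toNat.factorial : ℝ) *
      ∑ k ∈ Finset.range (w.toNat + 1),
        (poch (-(w.toNat : ℝ)) k * poch ((w.toNat : ℝ) + 2 * l) k) /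
            (poch (l + 1 / 2) k * (k.factorial : ℝ)) * ((1 - x) / 2) ^ k

/-- The weight matrix `W_{p,n}(x)`. -/
noncomputable def Wmat (n : ℕ) (p : ℝ) (x : ℝ) : Matrix (Fin 2) (Fin 2) ℝ :=
  (1 - x ^ 2) ^ ((n : ℝ) / 2 - 1) •
    !![p * x ^ 2 + (n : ℝ) - p, -(n : ℝ) * x; -(n : ℝ) * x, ((n : ℝ) - p) * x ^ 2 + p]

/-- The matrix valued polynomial `P_w`. -/
noncomputable def Pmat (n : ℕ) (p : ℝ) (w : ℕ) (x : ℝ) : Matrix (Fin 2) (Fin 2) ℝ :=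
  !![1 / ((n : ℝ) + 1) * geg (((n : ℝ) + 1) / 2) (w : ℤ) x +
        1 / (p + w) * geg (((n : ℝ) + 3) / 2) ((w : ℤ) - 2) x,
      1 / (p + w) * geg (((n : ℝ) + 3) / 2) ((w : ℤ) - 1) x;
      1 / ((n : ℝ) - p + w) * geg (((n : ℝ) + 3) / 2) ((w : ℤ) - 1) x,
      1 / ((n : ℝ) + 1) * geg (((n : ℝ) + 1) / 2) (w : ℤ) x +
        1 / ((n : ℝ) - p + w) * geg (((n : ℝ) + 3) / 2) ((w : ℤ) - 2) x]

set_option linter.unusedSimpArgs false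

lemma aux_poch_succ (a : ℝ) (k : ℕ) : poch a (k + 1) = poch a k * (a + k) := by
  simp [poch, Finset.prod_range_succ]

lemma aux_poch_succ' (a : ℝ) (k : ℕ) : poch a (k + 1) = a * poch (a + 1) k := by
  unfold poch
  rw [Finset.prod_range_succ', mul_comm]
  simp only [Nat.cast_zero, add_zero, Nat.cast_add, Nat.cast_one]
  congr 1
  apply Finset.prod_congr rfl
  intro i _
  ring

lemma aux_poch_pos (a : ℝ) (ha : 0 < a) (k : ℕ) : 0 < poch a k := by
  unfold poch
  apply Finset.prod_pos
  intro i _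
  positivity

lemma aux_poch_neg (w k : ℕ) (h : w < k) : poch (-(w : ℝ)) k = 0 := by
  unfold poch
  apply Finset.prod_eq_zero (Finset.mem_range.2 h)
  ring

/-- Coefficients of the Gegenbauer polynomial in the variable `(1-x)/2`. -/
noncomputable def cc (l : ℝ) (w k : ℕ) : ℝ :=
  poch (2 * l) w / (w.factorial : ℝ) *
    ((poch (-(w : ℝ)) k * poch ((w : ℝ) + 2 * l) k) / (poch (l + 1 / 2) k * (k.factorial : ℝ)))

lemma cc_R1 (l : ℝ) (hl : 0 < l) (w k : ℕ) :
    cc l w (k + 1) * ((l + 1 / 2 + k) * (k + 1)) = cc l w k * ((k - w) * (w + 2 * l + k)) := by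
  have h1 := (aux_poch_pos (l + 1 / 2) (by positivity) k).ne'
  have h2 : (k.factorial : ℝ) ≠ 0 := by positivity
  have h3 : (w.factorial : ℝ) ≠ 0 := by positivity
  have h4 : l + 1 / 2 + (k : ℝ) ≠ 0 := by positivity
  have h5 : (k : ℝ) + 1 ≠ 0 := by positivity
  unfold cc
  rw [aux_poch_succ, aux_poch_succ, aux_poch_succ, Nat.factorial_succ]
  push_cast
  generalize poch (l + 1 / 2) k = A at *
  generalize l + 1 / 2 + (k : ℝ) = B at *
  field_simp
  ring

lemma cc_R2 (l : ℝ) (hl : 0 < l) (w k : ℕ) :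
    (w + 1 - k) * cc l (w + 1) k = (w + 2 * l + k) * cc l w k := by
  have h1 := (aux_poch_pos (l + 1 / 2) (by positivity) k).ne'
  have h2 : (k.factorial : ℝ) ≠ 0 := by positivity
  have h3 : (w.factorial : ℝ) ≠ 0 := by positivity
  have h5 : (w : ℝ) + 1 ≠ 0 := by positivity
  have e1 : poch (-((w : ℝ) + 1)) k * (-((w : ℝ) + 1) + k) = -((w : ℝ) + 1) * poch (-(w : ℝ)) k := by
    rw [← aux_poch_succ, aux_poch_succ']
    congr 2
    ring
  have e2 : poch ((w : ℝ) + 2 * l) k * (w + 2 * l + k) = (w + 2 * l) * poch ((w : ℝ) + 1 + 2 * l) k := by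
    rw [← aux_poch_succ, aux_poch_succ']
    congr 2
    ring
  unfold cc
  rw [aux_poch_succ, Nat.factorial_succ]
  push_cast
  generalize poch (l + 1 / 2) k = A at *
  generalize poch (2 * l) w = A' at *
  generalize poch (-((w : ℝ) + 1)) k = B at *
  generalize poch (-(w : ℝ)) k = D at *
  generalize poch ((w : ℝ) + 2 * l) k = E at *
  generalize poch ((w : ℝ) + 1 + 2 * l) k = F at *
  field_simp
  linear_combination (-A' * (w + 2 * l) * F) * e1 - A' * D * (w + 1) * e2

lemma cc_R3 (l : ℝ) (hl : 0 < l) (w k : ℕ) :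
    cc l (w + 1) (k + 1) * ((l + 1 / 2 + k) * (k + 1)) =
      -((w + 2 * l + k + 1) * (w + 2 * l + k)) * cc l w k := by
  have h1 := cc_R1 l hl (w + 1) k
  have h2 := cc_R2 l hl w k
  push_cast at h1
  linear_combination h1 - (w + 2 * l + k + 1) * h2

lemma cc_R4 (l : ℝ) (hl : 0 < l) (w k : ℕ) :
    4 * l * cc (l + 1) w k = -(k + 1) * cc l (w + 1) (k + 1) := by
  have h2 : (k.factorial : ℝ) ≠ 0 := by positivity
  have h3 : (w.factorial : ℝ) ≠ 0 := by positivity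
  have h5 : (w : ℝ) + 1 ≠ 0 := by positivity
  have h6 : (k : ℝ) + 1 ≠ 0 := by positivity
  have h7 : l + 1 / 2 ≠ 0 := by positivity
  have e1 : poch (2 * l) (w + 1) * (2 * l + w + 1) = 2 * l * ((2 * l + 1) * poch (2 * (l + 1)) w) := by
    have : 2 * (l + 1) = 2 * l + 1 + 1 := by ring
    rw [this, ← aux_poch_succ', ← aux_poch_succ', aux_poch_succ _ (w + 1)]
    push_cast
    ring
  have e2 : poch (l + 1 / 2) (k + 1) = (l + 1 / 2) * poch (l + 1 + 1 / 2) k := by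
    rw [aux_poch_succ']
    congr 2
    ring
  have e3 : poch (-(((w + 1 : ℕ) : ℝ))) (k + 1) = -((w : ℝ) + 1) * poch (-(w : ℝ)) k := by
    rw [aux_poch_succ']
    push_cast
    congr 2
    ring
  have e4 : poch (((w + 1 : ℕ) : ℝ) + 2 * l) (k + 1) =
      (2 * l + w + 1) * poch ((w : ℝ) + 2 * (l + 1)) k := by
    rw [aux_poch_succ']
    push_cast
    have u1 : (w : ℝ) + 1 + 2 * l = 2 * l + w + 1 := by ring
    have u2 : 2 * l + (w : ℝ) + 1 + 1 = w + 2 * (l + 1) := by ring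
    rw [u1, u2]
  have h8 := (aux_poch_pos (l + 1 + 1 / 2) (by positivity) k).ne'
  unfold cc
  rw [e2, e3, e4, Nat.factorial_succ, Nat.factorial_succ]
  push_cast
  generalize poch (l + 1 + 1 / 2) k = A at *
  generalize poch (2 * l) (w + 1) = A' at *
  generalize poch (2 * (l + 1)) w = B at *
  generalize poch (-(w : ℝ)) k = D at *
  generalize poch ((w : ℝ) + 2 * (l + 1)) k = E at *
  have e5 : l + 1 / 2 = (2 * l + 1) / 2 := by ring
  have h9 : 2 * l + 1 ≠ 0 := by positivity
  rw [e5]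
  field_simp
  linear_combination (-2) * D * E * e1

/-- The Gegenbauer polynomial in the variable `(1-x)/2`. -/
noncomputable def GP (l : ℝ) (w : ℕ) : Polynomial ℝ :=
  ∑ k ∈ Finset.range (w + 1), Polynomial.C (cc l w k) * Polynomial.X ^ k

lemma GP_coeff (l : ℝ) (w k : ℕ) : (GP l w).coeff k = cc l w k := by
  unfold GP
  simp only [Polynomial.finsetSum_coeff, Polynomial.coeff_C_mul, Polynomial.coeff_X_pow]
  by_cases h : k < w + 1
  · simp [h]
  · have : cc l w k = 0 := by
      unfold cc
      rw [aux_poch_neg w k (by omega)]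
      simp
    simp [h, this]

lemma geg_nat (l : ℝ) (w : ℕ) (x : ℝ) : geg l (w : ℤ) x = (GP l w).eval ((1 - x) / 2) := by
  unfold geg GP cc
  simp [Polynomial.eval_finsetSum, Finset.mul_sum, mul_assoc]

lemma geg_neg (l : ℝ) (w : ℤ) (hw : w < 0) (x : ℝ) : geg l w x = 0 := by
  simp [geg, hw]

open Polynomial in
lemma GP_ode (l : ℝ) (hl : 0 < l) (w : ℕ) :
    X * derivative (derivative (GP l w)) - X * (X * derivative (derivative (GP l w)))
      + C (l + 1 / 2) * (derivative (GP l w) - C 2 * (X * derivative (GP l w)))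
      + C (w * (w + 2 * l)) * GP l w = 0 := by
  ext k
  have h := cc_R1 l hl w k
  rcases k with _ | _ | k
  · simp only [coeff_add, coeff_sub, coeff_C_mul, coeff_X_mul, coeff_zero, coeff_X_mul_zero, coeff_derivative, GP_coeff]
    push_cast at h ⊢
    try simp only [zero_add] at h ⊢
    linear_combination h
  · simp only [coeff_add, coeff_sub, coeff_C_mul, coeff_X_mul, coeff_zero, coeff_X_mul_zero, coeff_derivative, GP_coeff]
    push_cast at h ⊢
    try simp only [zero_add] at h ⊢
    linear_combination h
  · simp only [coeff_add, coeff_sub, coeff_C_mul, coeff_X_mul, coeff_zero, coeff_X_mul_zero, coeff_derivative, GP_coeff]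
    push_cast at h ⊢
    try simp only [zero_add] at h ⊢
    linear_combination h

open Polynomial in
lemma GP_up (l : ℝ) (hl : 0 < l) (w : ℕ) :
    C ((w : ℝ) + 1) * GP l (w + 1) = C (w + 2 * l) * (GP l w - C 2 * (X * GP l w))
      + C 2 * (X * derivative (GP l w) - X * (X * derivative (GP l w))) := by
  ext k
  rcases k with _ | k
  · have h := cc_R2 l hl w 0
    simp only [coeff_add, coeff_sub, coeff_C_mul, coeff_X_mul, coeff_zero, coeff_X_mul_zero, coeff_derivative, GP_coeff]
    push_cast at h ⊢
    try simp only [zero_add] at h ⊢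
    linear_combination h
  · have h1 := cc_R1 l hl w k
    have h3 := cc_R3 l hl w k
    have hn : (l + 1 / 2 + k) * ((k : ℝ) + 1) ≠ 0 := by positivity
    apply mul_right_cancel₀ hn
    rcases k with _ | k
    · simp only [coeff_add, coeff_sub, coeff_C_mul, coeff_X_mul, coeff_zero, coeff_X_mul_zero, coeff_derivative, GP_coeff]
      push_cast at h1 h3 ⊢
      try simp only [zero_add] at h1 h3 ⊢
      linear_combination (w + 1) * h3 - (w + 2 * l + 2) * h1
    · simp only [coeff_add, coeff_sub, coeff_C_mul, coeff_X_mul, coeff_zero, coeff_X_mul_zero, coeff_derivative, GP_coeff]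
      push_cast at h1 h3 ⊢
      try simp only [zero_add] at h1 h3 ⊢
      linear_combination (w + 1) * h3 - (w + 2 * l + 2 * (k + 1) + 2) * h1

open Polynomial in
lemma GP_down (l : ℝ) (hl : 0 < l) (w : ℕ) :
    C ((w : ℝ) + 2 * l) * GP l w = C ((w : ℝ) + 1) * (GP l (w + 1) - C 2 * (X * GP l (w + 1)))
      - C 2 * (X * derivative (GP l (w + 1)) - X * (X * derivative (GP l (w + 1)))) := by
  ext k
  rcases k with _ | k
  · have h := cc_R2 l hl w 0
    simp only [coeff_add, coeff_sub, coeff_C_mul, coeff_X_mul, coeff_zero, coeff_X_mul_zero, coeff_derivative, GP_coeff]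
    push_cast at h ⊢
    try simp only [zero_add] at h ⊢
    linear_combination -h
  · have h1 := cc_R1 l hl w k
    have h2 := cc_R2 l hl w k
    have h3 := cc_R3 l hl w k
    have hn : (l + 1 / 2 + k) * ((k : ℝ) + 1) ≠ 0 := by positivity
    apply mul_right_cancel₀ hn
    rcases k with _ | k
    · simp only [coeff_add, coeff_sub, coeff_C_mul, coeff_X_mul, coeff_zero, coeff_X_mul_zero, coeff_derivative, GP_coeff]
      push_cast at h1 h2 h3 ⊢
      try simp only [zero_add] at h1 h2 h3 ⊢
      linear_combination (w + 2 * l) * h1 - (w - 1) * h3 + 2 * (l + 1 / 2) * h2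
    · simp only [coeff_add, coeff_sub, coeff_C_mul, coeff_X_mul, coeff_zero, coeff_X_mul_zero, coeff_derivative, GP_coeff]
      push_cast at h1 h2 h3 ⊢
      try simp only [zero_add] at h1 h2 h3 ⊢
      linear_combination (w + 2 * l) * h1 - (w - 2 * (k + 1) - 1) * h3
        + 2 * ((l + 1 / 2 + (k + 1)) * (k + 2)) * h2

open Polynomial in
lemma GP_der (l : ℝ) (hl : 0 < l) (w : ℕ) :
    derivative (GP l (w + 1)) = C (-(4 * l)) * GP (l + 1) w := by
  ext k
  have h := cc_R4 l hl w k
  simp only [coeff_add, coeff_sub, coeff_C_mul, coeff_X_mul, coeff_zero, coeff_X_mul_zero, coeff_derivative, GP_coeff]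
  linear_combination h

/-- Derivative of the Gegenbauer polynomial. -/
noncomputable def gd (l : ℝ) (w : ℕ) (x : ℝ) : ℝ :=
  -(1 / 2) * (Polynomial.derivative (GP l w)).eval ((1 - x) / 2)

/-- Second derivative of the Gegenbauer polynomial. -/
noncomputable def gdd (l : ℝ) (w : ℕ) (x : ℝ) : ℝ :=
  (1 / 4) * (Polynomial.derivative (Polynomial.derivative (GP l w))).eval ((1 - x) / 2)

lemma poly_hasDeriv (P : Polynomial ℝ) (x : ℝ) :
    HasDerivAt (fun x : ℝ => P.eval ((1 - x) / 2))
      (-(1 / 2) * (Polynomial.derivative P).eval ((1 - x) / 2)) x := by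
  have h1 : HasDerivAt (fun x : ℝ => (1 - x) / 2) (-(1 / 2)) x := by
    exact (((hasDerivAt_id x).const_sub 1).div_const 2).congr_deriv (by ring)
  have h2 := (P.hasDerivAt ((1 - x) / 2)).comp x h1
  rw [mul_comm] at h2
  exact h2

lemma geg_hasDeriv (l : ℝ) (w : ℕ) (x : ℝ) :
    HasDerivAt (fun x => geg l (w : ℤ) x) (gd l w x) x := by
  simp only [geg_nat]
  exact poly_hasDeriv _ x

lemma gd_hasDeriv (l : ℝ) (w : ℕ) (x : ℝ) :
    HasDerivAt (fun x => gd l w x) (gdd l w x) x := by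
  unfold gd gdd
  exact ((poly_hasDeriv (Polynomial.derivative (GP l w)) x).const_mul (-(1 / 2))).congr_deriv (by ring)

lemma geg_ode (l : ℝ) (hl : 0 < l) (w : ℕ) (x : ℝ) :
    (1 - x ^ 2) * gdd l w x = (2 * l + 1) * x * gd l w x - w * (w + 2 * l) * geg l (w : ℤ) x := by
  have h := congrArg (Polynomial.eval ((1 - x) / 2)) (GP_ode l hl w)
  simp at h
  rw [geg_nat]
  unfold gd gdd
  linear_combination h

lemma geg_up (l : ℝ) (hl : 0 < l) (w : ℕ) (x : ℝ) :
    (w + 1) * geg l ((w : ℤ) + 1) x = (w + 2 * l) * x * geg l (w : ℤ) x - (1 - x ^ 2) * gd l w x := by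
  have h := congrArg (Polynomial.eval ((1 - x) / 2)) (GP_up l hl w)
  simp at h
  have e := geg_nat l (w + 1) x
  push_cast at e
  rw [geg_nat, e]
  unfold gd
  linear_combination h

lemma gd_zero (l : ℝ) (x : ℝ) : gd l 0 x = 0 := by
  simp [gd, GP]

lemma geg_down (l : ℝ) (hl : 0 < l) (w : ℕ) (x : ℝ) :
    (w + 2 * l - 1) * geg l ((w : ℤ) - 1) x = (1 - x ^ 2) * gd l w x + w * x * geg l (w : ℤ) x := by
  rcases w with _ | w
  · simp [gd_zero, geg_neg]
  · have h := congrArg (Polynomial.eval ((1 - x) / 2)) (GP_down l hl w)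
    simp at h
    have e : (((w + 1 : ℕ) : ℤ) - 1) = (w : ℤ) := by push_cast; ring
    rw [e, geg_nat, geg_nat]
    unfold gd
    push_cast
    linear_combination h

lemma geg_shift (l : ℝ) (hl : 0 < l) (w : ℕ) (x : ℝ) :
    2 * l * geg (l + 1) ((w : ℤ) - 1) x = gd l w x := by
  rcases w with _ | w
  · simp [gd_zero, geg_neg]
  · have e : (((w + 1 : ℕ) : ℤ) - 1) = (w : ℤ) := by push_cast; ring
    rw [e, geg_nat]
    unfold gd
    rw [GP_der l hl]
    simp
    ring

lemma geg_shift2 (l : ℝ) (hl : 1 / 2 < l) (w : ℕ) (x : ℝ) :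
    2 * l * geg (l + 1) ((w : ℤ) - 2) x = x * gd l w x - w * geg l (w : ℤ) x := by
  have hl0 : 0 < l := by linarith
  rcases w with _ | w
  · simp [gd_zero, geg_neg]
  · have e : (((w + 1 : ℕ) : ℤ) - 2) = (w : ℤ) - 1 := by push_cast; ring
    have e' : (((w + 1 : ℕ) : ℤ) - 1) = (w : ℤ) := by push_cast; ring
    rw [e, geg_shift l hl0]
    have h1 : ∀ y, ((w + 1 : ℕ) + 2 * l - 1) * geg l (w : ℤ) y =
        (1 - y ^ 2) * gd l (w + 1) y + (w + 1 : ℕ) * y * geg l ((w + 1 : ℕ) : ℤ) y := by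
      intro y
      rw [← e']
      exact geg_down l hl0 (w + 1) y
    have hd1 := (geg_hasDeriv l w x).const_mul (((w + 1 : ℕ) : ℝ) + 2 * l - 1)
    have hq : HasDerivAt (fun y : ℝ => 1 - y ^ 2) (-(2 * x)) x := by
      simpa using ((hasDerivAt_id x).pow 2).const_sub 1
    have hx : HasDerivAt (fun y : ℝ => ((w + 1 : ℕ) : ℝ) * y) ((w + 1 : ℕ) : ℝ) x := by
      simpa using (hasDerivAt_id x).const_mul ((w + 1 : ℕ) : ℝ)
    have hd2 := (hq.mul (gd_hasDeriv l (w + 1) x)).add (hx.mul (geg_hasDeriv l (w + 1) x))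
    have h3 := hd1.unique (hd2.congr_of_eventuallyEq (Filter.Eventually.of_forall h1))
    have h4 := geg_ode l hl0 (w + 1) x
    have hn : (w : ℝ) + 2 * l ≠ 0 := by positivity
    apply mul_left_cancel₀ hn
    push_cast at *
    linear_combination h3 + h4

lemma weight_integrable (n : ℕ) (hn : 1 ≤ n) (α : ℝ) (hα : α ∈ Set.Ioo (-1 : ℝ) 1) :
    IntervalIntegrable (fun x : ℝ => (1 - x ^ 2) ^ ((n : ℝ) / 2 - 1)) MeasureTheory.volume (-1) α := by
  have hn' : (1 : ℝ) ≤ n := by exact_mod_cast hn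
  have h1 : IntervalIntegrable (fun x : ℝ => (x + 1) ^ ((n : ℝ) / 2 - 1)) MeasureTheory.volume (-1) α := by
    have h0 := (intervalIntegral.intervalIntegrable_rpow' (a := 0) (b := α + 1)
      (r := (n : ℝ) / 2 - 1) (by linarith)).comp_add_right 1
    simpa using h0
  have h2 : ContinuousOn (fun x : ℝ => (1 - x) ^ ((n : ℝ) / 2 - 1)) (Set.uIcc (-1) α) := by
    rw [Set.uIcc_of_le hα.1.le]
    intro x hx
    apply ContinuousAt.continuousWithinAt
    apply ContinuousAt.rpow_const (by fun_prop)
    left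
    have := hx.2
    have := hα.2
    linarith
  refine (h1.mul_continuousOn h2).congr ?_
  intro x hx
  rw [Set.uIoc_of_le hα.1.le] at hx
  have := hx.1
  have := hx.2
  have := hα.2
  simp only
  rw [← Real.mul_rpow (by linarith) (by linarith)]
  congr 1
  ring

/-- The antiderivative without the weight factor. -/
noncomputable def Gf (n p a b x : ℝ) (A A1 B B1 : ℝ) : ℝ :=
  (n - p + b + 1) * B * (((1 - x ^ 2) * A1 + a * x * A) / (p + a) + (n - p + a) * x * A) -
  (n - p + a + 1) * A * (((1 - x ^ 2) * B1 + b * x * B) / (p + b) + (n - p + b) * x * B)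

lemma Gf_hasDeriv (n p a b x : ℝ) (A A1 B B1 : ℝ → ℝ) (A2 B2 : ℝ)
    (hA : HasDerivAt A (A1 x) x) (hA1 : HasDerivAt A1 A2 x)
    (hB : HasDerivAt B (B1 x) x) (hB1 : HasDerivAt B1 B2 x) :
    HasDerivAt (fun x => Gf n p a b x (A x) (A1 x) (B x) (B1 x))
      (((n - p + b + 1) * B1 x * (((1 - x ^ 2) * A1 x + a * x * A x) / (p + a) + (n - p + a) * x * A x)
        + (n - p + b + 1) * B x *
          ((-(2 * x) * A1 x + (1 - x ^ 2) * A2 + (a * A x + a * x * A1 x)) / (p + a)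
            + ((n - p + a) * A x + (n - p + a) * x * A1 x))) -
      ((n - p + a + 1) * A1 x * (((1 - x ^ 2) * B1 x + b * x * B x) / (p + b) + (n - p + b) * x * B x)
        + (n - p + a + 1) * A x *
          ((-(2 * x) * B1 x + (1 - x ^ 2) * B2 + (b * B x + b * x * B1 x)) / (p + b)
            + ((n - p + b) * B x + (n - p + b) * x * B1 x)))) x := by
  have hq : HasDerivAt (fun y : ℝ => 1 - y ^ 2) (-(2 * x)) x := by
    simpa using ((hasDerivAt_id x).pow 2).const_sub 1
  have hx : ∀ c : ℝ, HasDerivAt (fun y : ℝ => c * y) c x := by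
    intro c
    simpa using (hasDerivAt_id x).const_mul c
  exact ((hB.const_mul (n - p + b + 1)).mul
      ((((hq.mul hA1).add ((hx a).mul hA)).div_const (p + a)).add ((hx (n - p + a)).mul hA))).sub
    ((hA.const_mul (n - p + a + 1)).mul
      ((((hq.mul hB1).add ((hx b).mul hB)).div_const (p + b)).add ((hx (n - p + b)).mul hB)))

/-- The scalar integrand without the weight. -/
noncomputable def Hf (n p a b x : ℝ) (A A1 B B1 : ℝ) : ℝ :=
  ((p * A + x * A1) * (p * B + x * B1) * (p * x ^ 2 + n - p)
    - n * x * ((p * A + x * A1) * B1 + A1 * (p * B + x * B1))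
    + A1 * B1 * ((n - p) * x ^ 2 + p)) / ((n + 1) ^ 2 * (p + a) * (p + b))

lemma key_identity (n p a b x A A1 A2 B B1 B2 : ℝ) (hpa : p + a ≠ 0) (hpb : p + b ≠ 0)
    (hn : n + 1 ≠ 0) (hab : b - a ≠ 0) (hs : a + b + n + 1 ≠ 0)
    (hA : (1 - x ^ 2) * A2 = (n + 2) * x * A1 - a * (a + n + 1) * A)
    (hB : (1 - x ^ 2) * B2 = (n + 2) * x * B1 - b * (b + n + 1) * B) :
    Hf n p a b x A A1 B B1 = p / ((b - a) * (a + b + n + 1) * (n + 1) ^ 2) *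
      (-(n * x) * Gf n p a b x A A1 B B1 + (1 - x ^ 2) *
      (((n - p + b + 1) * B1 * (((1 - x ^ 2) * A1 + a * x * A) / (p + a) + (n - p + a) * x * A)
        + (n - p + b + 1) * B *
          ((-(2 * x) * A1 + (1 - x ^ 2) * A2 + (a * A + a * x * A1)) / (p + a)
            + ((n - p + a) * A + (n - p + a) * x * A1))) -
      ((n - p + a + 1) * A1 * (((1 - x ^ 2) * B1 + b * x * B) / (p + b) + (n - p + b) * x * B)
        + (n - p + a + 1) * A *
          ((-(2 * x) * B1 + (1 - x ^ 2) * B2 + (b * B + b * x * B1)) / (p + b)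
            + ((n - p + b) * B + (n - p + b) * x * B1))))) := by
  rw [hA, hB]
  unfold Hf Gf
  field_simp
  ring

lemma entry_eq (n : ℕ) (p : ℝ) (hp : 0 < p) (a b : ℕ) (x : ℝ) (hn : 1 ≤ n) :
    (Pmat n p a x * Wmat n p x * (Pmat n p b x)ᵀ) 0 0 =
      (1 - x ^ 2) ^ ((n : ℝ) / 2 - 1) * Hf n p a b x
        (geg (((n : ℝ) + 1) / 2) (a : ℤ) x) (gd (((n : ℝ) + 1) / 2) a x)
        (geg (((n : ℝ) + 1) / 2) (b : ℤ) x) (gd (((n : ℝ) + 1) / 2) b x) := by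
  have hn' : (1 : ℝ) ≤ n := by exact_mod_cast hn
  have hn1 : (n : ℝ) + 1 ≠ 0 := by positivity
  have hl : ((n : ℝ) + 3) / 2 = ((n : ℝ) + 1) / 2 + 1 := by ring
  have s1 : ∀ w : ℕ, geg (((n : ℝ) + 3) / 2) ((w : ℤ) - 1) x = gd (((n : ℝ) + 1) / 2) w x / (n + 1) := by
    intro w
    have := geg_shift (((n : ℝ) + 1) / 2) (by positivity) w x
    rw [hl, ← this]
    field_simp
  have s2 : ∀ w : ℕ, geg (((n : ℝ) + 3) / 2) ((w : ℤ) - 2) x =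
      (x * gd (((n : ℝ) + 1) / 2) w x - w * geg (((n : ℝ) + 1) / 2) (w : ℤ) x) / (n + 1) := by
    intro w
    have := geg_shift2 (((n : ℝ) + 1) / 2) (by linarith) w x
    rw [hl, ← this]
    field_simp
  have ha : p + (a : ℝ) ≠ 0 := by positivity
  have hb : p + (b : ℝ) ≠ 0 := by positivity
  simp only [Matrix.mul_apply, Fin.sum_univ_two, Matrix.transpose_apply, Pmat, Wmat, Matrix.smul_apply,
    smul_eq_mul, Matrix.of_apply, Matrix.cons_val', Matrix.cons_val_zero, Matrix.cons_val_one, s1, s2]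
  unfold Hf
  generalize geg (((n : ℝ) + 1) / 2) (a : ℤ) x = A
  generalize geg (((n : ℝ) + 1) / 2) (b : ℤ) x = B
  generalize gd (((n : ℝ) + 1) / 2) a x = A1
  generalize gd (((n : ℝ) + 1) / 2) b x = B1
  generalize (1 - x ^ 2) ^ ((n : ℝ) / 2 - 1) = V
  field_simp
  ring

/-- The `(1,1)` entry of the block `M̃^{j-1,k-1} = ∫_{-1}^α P_{j-1} W_{p,n} P_{k-1}^T dx`
for `1 ≤ j ≠ k ≤ N`, where `C_w` denotes `C_w^{(n+1)/2}` (with `C_w = 0` for `w < 0`). -/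
theorem stmt_19 (n : ℕ) (hn : 1 ≤ n) (p : ℝ) (hp : 0 < p) (hpn : p < n)
    (N : ℕ) (α : ℝ) (hα : α ∈ Set.Ioo (-1 : ℝ) 1) :
    ∀ j k : ℕ, 1 ≤ j → j ≤ N → 1 ≤ k → k ≤ N → j ≠ k →
      (∫ x in (-1 : ℝ)..α, (Pmat n p (j - 1) x * Wmat n p x * (Pmat n p (k - 1) x)ᵀ) 0 0) =
        p * (1 - α ^ 2) ^ ((n : ℝ) / 2) /
            (((k : ℝ) - j) * ((j : ℝ) + k + n - 1) * ((n : ℝ) + 1) ^ 2) *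
          ((j : ℝ) * ((n : ℝ) - p + j - 1) * ((n : ℝ) - p + k) / ((n : ℝ) + 2 * j - 1) *
              geg (((n : ℝ) + 1) / 2) (j : ℤ) α * geg (((n : ℝ) + 1) / 2) ((k : ℤ) - 1) α -
            (k : ℝ) * ((n : ℝ) - p + k - 1) * ((n : ℝ) - p + j) / ((n : ℝ) + 2 * k - 1) *
              geg (((n : ℝ) + 1) / 2) ((j : ℤ) - 1) α * geg (((n : ℝ) + 1) / 2) (k : ℤ) α +
            (p + j) * ((n : ℝ) + j - 1) * ((n : ℝ) - p + j) * ((n : ℝ) - p + k) /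
                ((p + j - 1) * ((n : ℝ) + 2 * j - 1)) *
              geg (((n : ℝ) + 1) / 2) ((j : ℤ) - 2) α *
              geg (((n : ℝ) + 1) / 2) ((k : ℤ) - 1) α -
            (p + k) * ((n : ℝ) + k - 1) * ((n : ℝ) - p + j) * ((n : ℝ) - p + k) /
                ((p + k - 1) * ((n : ℝ) + 2 * k - 1)) *
              geg (((n : ℝ) + 1) / 2) ((j : ℤ) - 1) α *
              geg (((n : ℝ) + 1) / 2) ((k : ℤ) - 2) α) := by
  intro j k hj _ hk _ hjk
  obtain ⟨a, rfl⟩ : ∃ a, j = a + 1 := ⟨j - 1, by omega⟩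
  obtain ⟨b, rfl⟩ : ∃ b, k = b + 1 := ⟨k - 1, by omega⟩
  simp only [Nat.add_sub_cancel]
  have hn' : (1 : ℝ) ≤ n := by exact_mod_cast hn
  have hl : 0 < ((n : ℝ) + 1) / 2 := by positivity
  have hab : (b : ℝ) - a ≠ 0 := by
    intro h
    apply hjk
    have : (b : ℝ) = a := by linarith
    have : b = a := by exact_mod_cast this
    omega
  have hpa : p + (a : ℝ) ≠ 0 := by positivity
  have hpb : p + (b : ℝ) ≠ 0 := by positivity
  have hn1 : (n : ℝ) + 1 ≠ 0 := by positivity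
  have hs : (a : ℝ) + b + n + 1 ≠ 0 := by positivity
  set l := ((n : ℝ) + 1) / 2 with hldef
  have h2l : 2 * l = n + 1 := by rw [hldef]; ring
  let G : ℝ → ℝ := fun x => Gf n p a b x (geg l (a : ℤ) x) (gd l a x) (geg l (b : ℤ) x) (gd l b x)
  have hGd := fun x => Gf_hasDeriv n p a b x (fun x => geg l (a : ℤ) x) (fun x => gd l a x)
    (fun x => geg l (b : ℤ) x) (fun x => gd l b x) _ _
    (geg_hasDeriv l a x) (gd_hasDeriv l a x) (geg_hasDeriv l b x) (gd_hasDeriv l b x)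
  have hGc : Continuous G := continuous_iff_continuousAt.2 fun x => (hGd x).continuousAt
  have cgeg : ∀ w : ℕ, Continuous (fun x => geg l (w : ℤ) x) := fun w =>
    continuous_iff_continuousAt.2 fun x => (geg_hasDeriv l w x).continuousAt
  have cgd : ∀ w : ℕ, Continuous (fun x => gd l w x) := fun w =>
    continuous_iff_continuousAt.2 fun x => (gd_hasDeriv l w x).continuousAt
  have hHc : Continuous (fun x => Hf n p a b x (geg l (a : ℤ) x) (gd l a x) (geg l (b : ℤ) x) (gd l b x)) := by
    have := cgeg a
    have := cgeg b
    have := cgd a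
    have := cgd b
    unfold Hf
    fun_prop
  let c : ℝ := p / (((b : ℝ) - a) * (a + b + n + 1) * ((n : ℝ) + 1) ^ 2)
  let F : ℝ → ℝ := fun x => c * ((1 - x ^ 2) ^ ((n : ℝ) / 2) * G x)
  have hFTC : (∫ x in (-1 : ℝ)..α, (Pmat n p a x * Wmat n p x * (Pmat n p b x)ᵀ) 0 0) = F α - F (-1) := by
    simp only [entry_eq n p hp a b _ hn]
    apply intervalIntegral.integral_eq_sub_of_hasDerivAt_of_le hα.1.le
    · apply Continuous.continuousOn
      apply Continuous.mul continuous_const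
      apply Continuous.mul _ hGc
      apply Continuous.rpow_const (by fun_prop)
      intro x
      right
      positivity
    · intro x hx
      have hq0 : 0 < 1 - x ^ 2 := by
        have := hx.1
        have := hx.2
        have := hα.2
        nlinarith
      have hq : HasDerivAt (fun y : ℝ => 1 - y ^ 2) (-(2 * x)) x := by
        simpa using ((hasDerivAt_id x).pow 2).const_sub 1
      have hw := hq.rpow_const (p := (n : ℝ) / 2) (Or.inl hq0.ne')
      have hF := (hw.mul (hGd x)).const_mul c
      refine hF.congr_deriv ?_
      have hA := geg_ode l hl a x
      have hB := geg_ode l hl b x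
      rw [h2l] at hA hB
      rw [key_identity n p a b x _ _ (gdd l a x) _ _ (gdd l b x) hpa hpb hn1 hab hs
        (by linear_combination hA) (by linear_combination hB)]
      have hsplit : (1 - x ^ 2) ^ ((n : ℝ) / 2) = (1 - x ^ 2) ^ ((n : ℝ) / 2 - 1) * (1 - x ^ 2) := by
        rw [← Real.rpow_add_one hq0.ne']
        congr 1
        ring
      rw [hsplit]
      ring
    · exact (weight_integrable n hn α hα).mul_continuousOn hHc.continuousOn
  rw [hFTC]
  have hF1 : F (-1) = 0 := by
    simp only [F]
    have : (1 : ℝ) - (-1) ^ 2 = 0 := by norm_num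
    rw [this, Real.zero_rpow (by positivity)]
    ring
  rw [hF1, sub_zero]
  have i1 : ∀ w : ℕ, ((w + 1 : ℕ) : ℤ) = (w : ℤ) + 1 := fun w => by push_cast; ring
  have i2 : ∀ w : ℕ, (w : ℤ) + 1 - 1 = (w : ℤ) := fun w => by ring
  have i3 : ∀ w : ℕ, (w : ℤ) + 1 - 2 = (w : ℤ) - 1 := fun w => by ring
  have up : ∀ w : ℕ, geg l ((w : ℤ) + 1) α =
      ((w + n + 1) * α * geg l (w : ℤ) α - (1 - α ^ 2) * gd l w α) / (w + 1) := by
    intro w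
    have h := geg_up l hl w α
    rw [h2l] at h
    have : (w : ℝ) + 1 ≠ 0 := by positivity
    field_simp
    linear_combination h
  have down : ∀ w : ℕ, geg l ((w : ℤ) - 1) α =
      ((1 - α ^ 2) * gd l w α + w * α * geg l (w : ℤ) α) / (w + n) := by
    intro w
    have h := geg_down l hl w α
    rw [h2l] at h
    have : (w : ℝ) + n ≠ 0 := by positivity
    field_simp
    linear_combination h
  simp only [i1, i2, i3, up, down, F, G, c, Gf]
  push_cast
  generalize geg l (a : ℤ) α = A
  generalize geg l (b : ℤ) α = B
  generalize gd l a α = A1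
  generalize gd l b α = B1
  generalize (1 - α ^ 2) ^ ((n : ℝ) / 2) = V
  have d1 : (n : ℝ) + 2 * (a + 1) - 1 = n + 2 * a + 1 := by ring
  have d2 : (n : ℝ) + 2 * (b + 1) - 1 = n + 2 * b + 1 := by ring
  have d3 : p + ((a : ℝ) + 1) - 1 = p + a := by ring
  have d4 : p + ((b : ℝ) + 1) - 1 = p + b := by ring
  have d5 : (b : ℝ) + 1 - (a + 1) = b - a := by ring
  have d6 : (a : ℝ) + 1 + (b + 1) + n - 1 = a + b + n + 1 := by ring
  have d7 : (n : ℝ) + (a + 1) - 1 = a + n := by ring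
  have d8 : (n : ℝ) + (b + 1) - 1 = b + n := by ring
  rw [d1, d2, d3, d4, d5, d6, d7, d8]
  have n1 : (n : ℝ) + 2 * a + 1 ≠ 0 := by positivity
  have n2 : (n : ℝ) + 2 * b + 1 ≠ 0 := by positivity
  have n3 : (a : ℝ) + n ≠ 0 := by positivity
  have n4 : (b : ℝ) + n ≠ 0 := by positivity
  have n5 : (a : ℝ) + 1 ≠ 0 := by positivity
  have n6 : (b : ℝ) + 1 ≠ 0 := by positivity
  field_simp
  ring
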